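/- arXiv:2410.09930 — 2 statements merged into one kernel-verified Lean document; each statement's English description precedes it below -/
import Mathlib

section
/- The inverse Fourier transform of ξ₁³ξ₂/(|ξ|²)³ on ℝ³ equals −3xy(y²+z²)/(32π (x²+y²+z²)^{5/2}) as a tempered distribution. -/
/-!
The multiplier is a superposition of Gaussians,
`ξ₀³ ξ₁ / |ξ|⁶ = ½ ∫₀^∞ t² ξ₀³ ξ₁ exp(-t|ξ|²) dt`,
and for each fixed `t > 0` the asserted pairing identity is elementary: it is Fubini's theorem
together with the one-dimensional moments of a modulated Gaussian (`gaussian_pairing`,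
`moment_succ`). With `t = 1/s`, the resulting kernels `gaussKernel s x`, weighted by `s⁻⁴`, are
combinations of `s^(3/2) exp(-|x|²s/4)` and `s^(1/2) exp(-|x|²s/4)` (`kernel_eq`), so integrating
in `s` gives two Gamma integrals whose sum is the kernel in the statement (`target_eq`).

The exchange of the `s`-integral with the space integral needs absolute integrability on both
sides, which `integrable_superposition` gives: after integrating out `s`, what remains is a
Schwartz function times a singularity of order at most `|v|⁻²`, integrable in dimension three. On
the frequency side this uses that `invFT φ` is again Schwartz (`exists_schwartz_invFT`).
-/

open MeasureTheory

/-- Inverse Fourier transform on `ℝ³` with the convention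
`(F⁻¹ φ)(x) = (2π)⁻³ ∫ e^{i x·ξ} φ(ξ) dξ`, under which the fundamental
solution of `−Δ` is `1/(4π|x|)`. -/
noncomputable def invFT (φ : (Fin 3 → ℝ) → ℂ) (x : Fin 3 → ℝ) : ℂ :=
  ((2 * Real.pi) ^ 3)⁻¹ •
    ∫ ξ : Fin 3 → ℝ,
      Complex.exp (Complex.I * ((x 0 * ξ 0 + x 1 * ξ 1 + x 2 * ξ 2 : ℝ) : ℂ)) * φ ξ

/-! ### Gaussian superposition and absolute integrability -/

/-- The squared Euclidean length on `ℝ³`, in the coordinates used by `invFT_xi1_cubed_xi2`;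
the ambient norm of `Fin 3 → ℝ` is the sup norm. -/
def nsq (v : Fin 3 → ℝ) : ℝ := v 0 ^ 2 + v 1 ^ 2 + v 2 ^ 2

lemma continuous_nsq : Continuous nsq := by unfold nsq; fun_prop

lemma norm_sq_le_nsq (v : Fin 3 → ℝ) : ‖v‖ ^ 2 ≤ nsq v := by
  have h : ‖v‖ ≤ Real.sqrt (nsq v) := by
    rw [pi_norm_le_iff_of_nonneg (Real.sqrt_nonneg _)]
    intro i
    rw [Real.norm_eq_abs]
    apply Real.abs_le_sqrt
    unfold nsq
    fin_cases i <;> simp <;> nlinarith [sq_nonneg (v 0), sq_nonneg (v 1), sq_nonneg (v 2)]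
  have h0 : 0 ≤ nsq v := by unfold nsq; positivity
  calc ‖v‖ ^ 2 ≤ Real.sqrt (nsq v) ^ 2 := by gcongr
    _ = nsq v := Real.sq_sqrt h0

lemma nsq_nonneg (v : Fin 3 → ℝ) : 0 ≤ nsq v := by unfold nsq; positivity

lemma nsq_pos {v : Fin 3 → ℝ} (hv : v ≠ 0) : 0 < nsq v :=
  lt_of_lt_of_le (by positivity) (norm_sq_le_nsq v)

/-- In dimension three, a Schwartz function times a singularity `‖v‖ ^ (-k)` with `k ≤ 2`
is integrable. -/
lemma integrable_of_norm_le (Ψ : SchwartzMap (Fin 3 → ℝ) ℂ) {k : ℕ} (hk : k ≤ 2)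
    {h : (Fin 3 → ℝ) → ℂ} (hm : AEStronglyMeasurable h volume)
    (hh : ∀ v, ‖h v‖ ≤ (‖v‖ ^ k)⁻¹ * ‖Ψ v‖) : Integrable h := by
  obtain ⟨C, hC⟩ : ∃ C : ℝ, ∀ v, (1 + ‖v‖) ^ 4 * ‖Ψ v‖ ≤ C := by
    refine ⟨2 ^ 4 * ((Finset.Iic (4, 0)).sup fun m => SchwartzMap.seminorm ℝ m.1 m.2) Ψ,
      fun v => ?_⟩
    have := SchwartzMap.one_add_le_sup_seminorm_apply (𝕜 := ℝ) (m := (4, 0)) (k := 4) (n := 0)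
      le_rfl le_rfl Ψ v
    rwa [norm_iteratedFDeriv_zero] at this
  have key : Integrable (fun v : Fin 3 → ℝ => (‖v‖ ^ k)⁻¹ * ((1 + ‖v‖) ^ 4)⁻¹) := by
    rw [integrable_fun_norm_addHaar volume (f := fun y : ℝ => (y ^ k)⁻¹ * ((1 + y) ^ 4)⁻¹)]
    have h1 : Integrable (fun y : ℝ => (1 + ‖y‖) ^ (-2 : ℝ)) :=
      integrable_one_add_norm (by simp)
    refine (h1.integrableOn (s := Set.Ioi 0)).mono' (by fun_prop) ?_
    filter_upwards [ae_restrict_mem measurableSet_Ioi] with y hy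
    have hy : 0 < y := hy
    rw [Real.norm_of_nonneg (by simp; positivity), Real.norm_of_nonneg hy.le,
      Real.rpow_neg (by positivity)]
    simp only [Module.finrank_fin_fun, smul_eq_mul, Nat.add_one_sub_one]
    norm_cast
    rw [← mul_assoc, ← div_eq_mul_inv, ← div_eq_mul_inv, div_div, inv_eq_one_div,
      div_le_div_iff₀ (by positivity) (by positivity)]
    interval_cases k
    · nlinarith [mul_pos hy hy, pow_pos hy 3, pow_pos hy 4]
    · nlinarith [mul_pos hy hy, pow_pos hy 3, pow_pos hy 4, pow_pos hy 5]
    · nlinarith [mul_pos hy hy, pow_pos hy 3, pow_pos hy 4, pow_pos hy 5, pow_pos hy 6]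
  refine (key.const_mul C).mono' hm (.of_forall fun v => (hh v).trans ?_)
  have : ‖Ψ v‖ ≤ C * ((1 + ‖v‖) ^ 4)⁻¹ := by
    rw [← div_eq_mul_inv, le_div_iff₀ (by positivity), mul_comm]; exact hC v
  calc (‖v‖ ^ k)⁻¹ * ‖Ψ v‖ ≤ (‖v‖ ^ k)⁻¹ * (C * ((1 + ‖v‖) ^ 4)⁻¹) := by gcongr
    _ = _ := by ring

/-- The Gamma integral behind the superposition
`Γ(a+1) (b|v|²)^(-a-1) = ∫ s^a exp(-b|v|²s) ds`. -/
lemma integral_rpow_mul_exp {a b : ℝ} (ha : -1 < a) (hb : 0 < b) {v : Fin 3 → ℝ} (hv : v ≠ 0) :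
    ∫ s in Set.Ioi (0 : ℝ), s ^ a * Real.exp (-(b * nsq v * s))
      = Real.Gamma (a + 1) * (b * nsq v) ^ (-(a + 1)) := by
  have hQ := mul_pos hb (nsq_pos hv)
  have := Real.integral_rpow_mul_exp_neg_mul_Ioi (a := a + 1) (by linarith) hQ
  rw [add_sub_cancel_right] at this
  rw [this, Real.rpow_neg hQ.le, one_div, Real.inv_rpow hQ.le, mul_comm]

lemma integrable_rpow_mul_exp {a b : ℝ} (ha : -1 < a) (hb : 0 < b) {v : Fin 3 → ℝ} (hv : v ≠ 0) :
    IntegrableOn (fun s : ℝ => s ^ a * Real.exp (-(b * nsq v * s))) (Set.Ioi 0) := by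
  apply Integrable.of_integral_ne_zero
  rw [integral_rpow_mul_exp ha hb hv]
  have := nsq_pos hv
  have := Real.Gamma_pos_of_pos (s := a + 1) (by linarith)
  positivity

lemma integral_rpow_mul_exp_mul_const {a b : ℝ} (ha : -1 < a) (hb : 0 < b) {v : Fin 3 → ℝ}
    (hv : v ≠ 0) (c : ℂ) :
    ∫ s in Set.Ioi (0 : ℝ), ((s ^ a * Real.exp (-(b * nsq v * s)) : ℝ) : ℂ) * c
      = ((Real.Gamma (a + 1) * (b * nsq v) ^ (-(a + 1)) : ℝ) : ℂ) * c := by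
  rw [integral_mul_const, integral_complex_ofReal, integral_rpow_mul_exp ha hb hv]

lemma integrable_rpow_mul_exp_mul_const {a b : ℝ} (ha : -1 < a) (hb : 0 < b) {v : Fin 3 → ℝ}
    (hv : v ≠ 0) (c : ℂ) :
    IntegrableOn (fun s : ℝ => ((s ^ a * Real.exp (-(b * nsq v * s)) : ℝ) : ℂ) * c)
      (Set.Ioi 0) :=
  (integrable_rpow_mul_exp ha hb hv).ofReal.mul_const c

/-- Absolute integrability on `(0,∞) × ℝ³` of the Gaussian superposition against `P Ψ`, when `P`
vanishes at the origin to a high enough order `d` that `|v|^(-2(a+1)) |P|` is at most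
`|v|^(-2)` near the origin. -/
lemma integrable_superposition {a b : ℝ} (ha : -1 < a) (hb : 0 < b)
    (Ψ : SchwartzMap (Fin 3 → ℝ) ℂ) {P : (Fin 3 → ℝ) → ℝ} (hPc : Continuous P) {d k : ℕ}
    (hP : ∀ v, |P v| ≤ ‖v‖ ^ d) (hk : k ≤ 2) (hdk : 2 * (a + 1) = d + k) :
    Integrable (fun p : ℝ × (Fin 3 → ℝ) =>
        ((p.1 ^ a * Real.exp (-(b * nsq p.2 * p.1)) : ℝ) : ℂ) * ((P p.2 : ℂ) * Ψ p.2))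
      ((volume.restrict (Set.Ioi 0)).prod volume) := by
  have hne : ∀ᵐ v : Fin 3 → ℝ, v ≠ 0 := by simp [ae_iff]
  have hΨ := Ψ.continuous
  have hm : Measurable (fun p : ℝ × (Fin 3 → ℝ) =>
        ((p.1 ^ a * Real.exp (-(b * nsq p.2 * p.1)) : ℝ) : ℂ) * ((P p.2 : ℂ) * Ψ p.2)) := by
    have := continuous_nsq.measurable
    have := hPc.measurable
    have := hΨ.measurable
    fun_prop
  rw [integrable_prod_iff' hm.aestronglyMeasurable]
  constructor
  · filter_upwards [hne] with v hv
    exact integrable_rpow_mul_exp_mul_const ha hb hv _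
  · have h1 : (fun v : Fin 3 → ℝ => ∫ s in Set.Ioi (0 : ℝ),
        ‖((s ^ a * Real.exp (-(b * nsq v * s)) : ℝ) : ℂ) * ((P v : ℂ) * Ψ v)‖)
        =ᵐ[volume] fun v => (Real.Gamma (a + 1) * b ^ (-(a + 1))) *
          ‖(((nsq v) ^ (-(a + 1)) : ℝ) : ℂ) * ((P v : ℂ) * Ψ v)‖ := by
      filter_upwards [hne] with v hv
      have : ∀ s ∈ Set.Ioi (0 : ℝ),
          ‖((s ^ a * Real.exp (-(b * nsq v * s)) : ℝ) : ℂ) * ((P v : ℂ) * Ψ v)‖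
          = (s ^ a * Real.exp (-(b * nsq v * s))) * ‖(P v : ℂ) * Ψ v‖ := by
        intro s hs
        have hs : 0 < s := hs
        rw [norm_mul, Complex.norm_of_nonneg (by positivity)]
      rw [setIntegral_congr_fun measurableSet_Ioi this, integral_mul_const,
        integral_rpow_mul_exp ha hb hv, norm_mul ((nsq v ^ (-(a + 1)) : ℝ) : ℂ),
        Complex.norm_of_nonneg (Real.rpow_nonneg (nsq_nonneg v) _),
        Real.mul_rpow hb.le (nsq_nonneg v)]
      ring
    rw [integrable_congr h1]
    refine Integrable.const_mul (Integrable.norm ?_) _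
    refine integrable_of_norm_le Ψ hk ?_ fun v => ?_
    · have := continuous_nsq.measurable
      have := hPc.measurable
      have := hΨ.measurable
      exact Measurable.aestronglyMeasurable (by fun_prop)
    · rcases eq_or_ne v 0 with rfl | hv
      · rw [show nsq 0 = 0 by simp [nsq], Real.zero_rpow (by linarith)]
        simp; positivity
      have hv' : 0 < ‖v‖ := norm_pos_iff.2 hv
      rw [norm_mul, norm_mul, Complex.norm_of_nonneg (Real.rpow_nonneg (nsq_nonneg v) _),
        Complex.norm_real, Real.norm_eq_abs, ← mul_assoc]
      gcongr
      calc (nsq v) ^ (-(a + 1)) * |P v| ≤ (‖v‖ ^ 2) ^ (-(a + 1)) * ‖v‖ ^ d := by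
            gcongr ?_ * ?_
            · exact Real.rpow_le_rpow_of_nonpos (by positivity) (norm_sq_le_nsq v) (by linarith)
            · exact hP v
        _ = (‖v‖ ^ k)⁻¹ := by
            rw [← Real.rpow_natCast, ← Real.rpow_natCast, ← Real.rpow_natCast,
              ← Real.rpow_mul hv'.le, ← Real.rpow_add hv', ← Real.rpow_neg hv'.le]
            congr 1
            push_cast
            linarith

/-! ### The Fourier side: Schwartz invariance and Gaussian moments -/

/-- The inverse Fourier transform preserves the Schwartz class: `invFT φ` is a rescaling of the
library transform on `EuclideanSpace ℝ (Fin 3)`. -/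
lemma exists_schwartz_invFT (φ : SchwartzMap (Fin 3 → ℝ) ℂ) :
    ∃ Ψ : SchwartzMap (Fin 3 → ℝ) ℂ, ∀ x, Ψ x = invFT (fun v => φ v) x := by
  let e := EuclideanSpace.equiv (Fin 3) ℝ
  let ψ : SchwartzMap (EuclideanSpace ℝ (Fin 3)) ℂ :=
    SchwartzMap.compCLMOfContinuousLinearEquiv ℝ e φ
  let u : ℝˣ := Units.mk0 ((2 * Real.pi)⁻¹) (by positivity)
  let L : (Fin 3 → ℝ) ≃L[ℝ] EuclideanSpace ℝ (Fin 3) :=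
    (ContinuousLinearEquiv.smulLeft u).trans e.symm
  refine ⟨((2 * Real.pi) ^ 3)⁻¹ • SchwartzMap.compCLMOfContinuousLinearEquiv ℝ L
    (FourierTransformInv.fourierInv ψ), fun x => ?_⟩
  simp only [smul_apply, SchwartzMap.compCLMOfContinuousLinearEquiv_apply,
    Function.comp, invFT]
  congr 1
  rw [SchwartzMap.fourierInv_coe, Real.fourierInv_eq',
    ← (PiLp.volume_preserving_toLp (Fin 3)).integral_comp
      (MeasurableEquiv.toLp 2 (Fin 3 → ℝ)).measurableEmbedding]
  congr 1
  ext ξ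
  have h1 : ψ (WithLp.toLp 2 ξ) = φ ξ := rfl
  have h2 : 2 * Real.pi * inner ℝ (WithLp.toLp 2 ξ) (L x)
      = x 0 * ξ 0 + x 1 * ξ 1 + x 2 * ξ 2 := by
    have : ∀ i, (L x) i = (2 * Real.pi)⁻¹ * x i := fun i => rfl
    simp only [PiLp.inner_apply, Fin.sum_univ_three, this]
    simp
    field_simp
  rw [h1, h2, smul_eq_mul, mul_comm Complex.I]

lemma integrable_pow_mul_gaussian {b : ℝ} (hb : 0 < b) (x : ℝ) (k : ℕ) :
    Integrable fun u : ℝ =>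
      (u : ℂ) ^ k * (Complex.exp (Complex.I * x * u) * Complex.exp (-b * u ^ 2)) := by
  have h := integrable_rpow_mul_exp_neg_mul_sq hb (s := k)
    (by have : (0 : ℝ) ≤ k := k.cast_nonneg
        linarith)
  refine h.norm.mono' (by fun_prop) (.of_forall fun u => le_of_eq ?_)
  simp [Complex.norm_exp]
  norm_cast
  simp

/-- Integration by parts for the moments of a modulated Gaussian. -/
lemma moment_succ {b : ℝ} (hb : 0 < b) (x : ℝ) (k : ℕ) :
    2 * b * ∫ u : ℝ, (u : ℂ) ^ (k + 1) *
        (Complex.exp (Complex.I * x * u) * Complex.exp (-b * u ^ 2))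
      = k * (∫ u : ℝ, (u : ℂ) ^ (k - 1) *
          (Complex.exp (Complex.I * x * u) * Complex.exp (-b * u ^ 2)))
        + Complex.I * x * ∫ u : ℝ, (u : ℂ) ^ k *
          (Complex.exp (Complex.I * x * u) * Complex.exp (-b * u ^ 2)) := by
  have hi := integrable_pow_mul_gaussian hb x
  set E : ℝ → ℂ := fun u => Complex.exp (Complex.I * x * u) * Complex.exp (-b * u ^ 2) with hE
  have hd : ∀ u : ℝ, HasDerivAt (fun u : ℝ => (u : ℂ) ^ k * E u)
      (k * ((u : ℂ) ^ (k - 1) * E u) + Complex.I * x * ((u : ℂ) ^ k * E u)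
        - 2 * b * ((u : ℂ) ^ (k + 1) * E u)) u := by
    intro u
    have h1 : HasDerivAt (fun z : ℂ => z ^ k *
        (Complex.exp (Complex.I * x * z) * Complex.exp (-b * z ^ 2))) _ (u : ℂ) :=
      (hasDerivAt_pow k _).mul ((((hasDerivAt_id _).const_mul (Complex.I * x)).cexp).mul
        ((((hasDerivAt_pow 2 _)).const_mul (-b : ℂ)).cexp))
    convert! h1.comp_ofReal using 1
    simp [hE]
    ring
  have h0 := integral_eq_zero_of_hasDerivAt_of_integrable hd
    ((((hi _).const_mul _).add ((hi _).const_mul _)).sub ((hi _).const_mul _)) (hi k)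
  have hj : ∀ (c : ℂ) (j : ℕ), Integrable fun u : ℝ => c * ((u : ℂ) ^ j * E u) :=
    fun c j => (hi j).const_mul c
  rw [integral_sub (f := fun u : ℝ => (k : ℂ) * ((u : ℂ) ^ (k - 1) * E u)
      + Complex.I * x * ((u : ℂ) ^ k * E u)) ((hj _ _).add (hj _ _)) (hj _ _),
    integral_add (hj _ _) (hj _ _)] at h0
  simp only [integral_const_mul, hE] at h0
  linear_combination -h0

lemma moment_zero {s : ℝ} (hs : 0 < s) (x : ℝ) :
    ∫ u : ℝ, (u : ℂ) ^ 0 *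
        (Complex.exp (Complex.I * x * u) * Complex.exp (-(s⁻¹ : ℝ) * u ^ 2))
      = ((Real.sqrt Real.pi * Real.sqrt s * Real.exp (-(s * x ^ 2 / 4)) : ℝ) : ℂ) := by
  simp only [pow_zero, one_mul]
  rw [fourierIntegral_gaussian (by simpa using hs)]
  push_cast
  congr 1
  · rw [show (Real.pi : ℂ) / ((s : ℂ))⁻¹ = ((Real.pi * s : ℝ) : ℂ) by push_cast; simp,
      show (1 / 2 : ℂ) = ((1 / 2 : ℝ) : ℂ) by push_cast; rfl,
      ← Complex.ofReal_cpow (by positivity), ← Real.sqrt_eq_rpow, Real.sqrt_mul (by positivity)]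
    push_cast; rfl
  · congr 1
    have : (s : ℂ) ≠ 0 := by exact_mod_cast hs.ne'
    field_simp

lemma moment_one {s : ℝ} (hs : 0 < s) (x : ℝ) :
    ∫ u : ℝ, (u : ℂ) ^ 1 *
        (Complex.exp (Complex.I * x * u) * Complex.exp (-(s⁻¹ : ℝ) * u ^ 2))
      = Complex.I * x * s / 2 *
        ((Real.sqrt Real.pi * Real.sqrt s * Real.exp (-(s * x ^ 2 / 4)) : ℝ) : ℂ) := by
  have h := moment_succ (inv_pos.2 hs) x 0
  rw [moment_zero hs] at h
  have : (s : ℂ) ≠ 0 := by exact_mod_cast hs.ne'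
  generalize (∫ u : ℝ, (u : ℂ) ^ (0 + 1) *
        (Complex.exp (Complex.I * x * u) * Complex.exp (-(s⁻¹ : ℝ) * u ^ 2))) = A at *
  rw [Complex.ofReal_inv] at h
  field_simp at h
  push_cast at h ⊢
  linear_combination h / 2

lemma moment_three {s : ℝ} (hs : 0 < s) (x : ℝ) :
    ∫ u : ℝ, (u : ℂ) ^ 3 *
        (Complex.exp (Complex.I * x * u) * Complex.exp (-(s⁻¹ : ℝ) * u ^ 2))
      = Complex.I * x * s / 2 * (3 * s / 2 - (x * s / 2) ^ 2) *
        ((Real.sqrt Real.pi * Real.sqrt s * Real.exp (-(s * x ^ 2 / 4)) : ℝ) : ℂ) := by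
  have h1 := moment_succ (inv_pos.2 hs) x 1
  have h2 := moment_succ (inv_pos.2 hs) x 2
  norm_num only at h1 h2
  rw [moment_one hs, moment_zero hs] at h1
  rw [moment_one hs] at h2
  have : (s : ℂ) ≠ 0 := by exact_mod_cast hs.ne'
  generalize (∫ u : ℝ, (u : ℂ) ^ 3 *
        (Complex.exp (Complex.I * x * u) * Complex.exp (-(s⁻¹ : ℝ) * u ^ 2))) = A at *
  generalize (∫ u : ℝ, (u : ℂ) ^ 2 *
        (Complex.exp (Complex.I * x * u) * Complex.exp (-(s⁻¹ : ℝ) * u ^ 2))) = B at *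
  generalize ((Real.sqrt Real.pi * Real.sqrt s * Real.exp (-(s * x ^ 2 / 4)) : ℝ) : ℂ) = Z at *
  rw [Complex.ofReal_inv] at h1 h2
  field_simp at h1 h2
  linear_combination h2 / 2 + Complex.I * x * s / 8 * h1
    + (Complex.I * x ^ 3 * s ^ 3 * Z / 8) * Complex.I_sq

/-! ### The identity for Gaussian multipliers and its superposition -/

/-- One tensor factor of `exp(i x·ξ) ξ₀³ ξ₁ exp(-|ξ|²/s)`, in the `i`-th coordinate `u` of `ξ`. -/
noncomputable def gaussFactor (s : ℝ) (x : Fin 3 → ℝ) (i : Fin 3) (u : ℝ) : ℂ :=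
  (u : ℂ) ^ ((![3, 1, 0] : Fin 3 → ℕ) i) *
    (Complex.exp (Complex.I * (x i : ℝ) * u) * Complex.exp (-(s⁻¹ : ℝ) * u ^ 2))

lemma prod_gaussFactor (s : ℝ) (x ξ : Fin 3 → ℝ) :
    ∏ i, gaussFactor s x i (ξ i) = ((Real.exp (-(1 * nsq ξ * s⁻¹)) : ℝ) : ℂ) *
      (((ξ 0 ^ 3 * ξ 1 : ℝ) : ℂ) *
        Complex.exp (Complex.I * ((ξ 0 * x 0 + ξ 1 * x 1 + ξ 2 * x 2 : ℝ) : ℂ))) := by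
  have h1 : Complex.exp (Complex.I * ((ξ 0 * x 0 + ξ 1 * x 1 + ξ 2 * x 2 : ℝ) : ℂ))
      = Complex.exp (Complex.I * x 0 * ξ 0) * Complex.exp (Complex.I * x 1 * ξ 1) *
        Complex.exp (Complex.I * x 2 * ξ 2) := by
    rw [← Complex.exp_add, ← Complex.exp_add]; congr 1; push_cast; ring
  have h2 : ((Real.exp (-(1 * nsq ξ * s⁻¹)) : ℝ) : ℂ)
      = Complex.exp (-(s⁻¹ : ℝ) * ξ 0 ^ 2) * Complex.exp (-(s⁻¹ : ℝ) * ξ 1 ^ 2) *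
        Complex.exp (-(s⁻¹ : ℝ) * ξ 2 ^ 2) := by
    rw [← Complex.exp_add, ← Complex.exp_add, Complex.ofReal_exp]
    congr 1; unfold nsq; push_cast; ring
  rw [h1, h2, Fin.prod_univ_three]
  simp [gaussFactor]
  ring

/-- The kernel `F⁻¹(ξ₀³ ξ₁ exp(-|ξ|²/s))`. -/
noncomputable def gaussKernel (s : ℝ) (x : Fin 3 → ℝ) : ℝ :=
  ((2 * Real.pi) ^ 3)⁻¹ * ((Real.sqrt Real.pi * Real.sqrt s) ^ 3 *
    Real.exp (-(1 / 4 * nsq x * s)) *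
    (x 0 * x 1 * s ^ 2 / 4 * ((x 0 * s / 2) ^ 2 - 3 * s / 2)))

lemma integral_prod_gaussFactor {s : ℝ} (hs : 0 < s) (x : Fin 3 → ℝ) :
    ((2 * Real.pi) ^ 3)⁻¹ • ∫ ξ : Fin 3 → ℝ, ∏ i, gaussFactor s x i (ξ i)
      = (gaussKernel s x : ℂ) := by
  rw [integral_fintype_prod_volume_eq_prod, Fin.prod_univ_three]
  have h0 : ∫ u, gaussFactor s x 0 u = _ := moment_three hs (x 0)
  have h1 : ∫ u, gaussFactor s x 1 u = _ := moment_one hs (x 1)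
  have h2 : ∫ u, gaussFactor s x 2 u = _ := moment_zero hs (x 2)
  have h3 : Real.exp (-(1 / 4 * nsq x * s)) = Real.exp (-(s * x 0 ^ 2 / 4)) *
      Real.exp (-(s * x 1 ^ 2 / 4)) * Real.exp (-(s * x 2 ^ 2 / 4)) := by
    rw [← Real.exp_add, ← Real.exp_add]; congr 1; unfold nsq; ring
  rw [h0, h1, h2, gaussKernel, h3, Complex.real_smul, Complex.ofReal_mul]
  push_cast
  ring_nf
  simp only [Complex.I_sq]
  ring

lemma continuous_prod_gaussFactor (s : ℝ) : Continuous fun p : (Fin 3 → ℝ) × (Fin 3 → ℝ) =>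
    ∏ i, gaussFactor s p.2 i (p.1 i) := by
  unfold gaussFactor; fun_prop

/-- The identity to be proved, with `ξ₀³ ξ₁ exp(-|ξ|²/s)` in place of `ξ₀³ ξ₁ / |ξ|⁶`. -/
lemma gaussian_pairing (φ : SchwartzMap (Fin 3 → ℝ) ℂ) {s : ℝ} (hs : 0 < s) :
    ∫ ξ : Fin 3 → ℝ, ((Real.exp (-(1 * nsq ξ * s⁻¹)) : ℝ) : ℂ) *
        (((ξ 0 ^ 3 * ξ 1 : ℝ) : ℂ) * invFT (fun v => φ v) ξ)
      = ∫ x : Fin 3 → ℝ, (gaussKernel s x : ℂ) * φ x := by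
  have hint : Integrable (Function.uncurry fun ξ x : Fin 3 → ℝ =>
      ((2 * Real.pi) ^ 3)⁻¹ • ((∏ i, gaussFactor s x i (ξ i)) * φ x)) (volume.prod volume) := by
    have h0 : Integrable fun ξ : Fin 3 → ℝ => ∏ i, gaussFactor s 0 i (ξ i) :=
      Integrable.fintype_prod fun i => integrable_pow_mul_gaussian (inv_pos.2 hs) _ _
    have h1 : Integrable (fun ξ : Fin 3 → ℝ => φ ξ) := φ.integrable
    have h2 : Integrable (fun p : (Fin 3 → ℝ) × (Fin 3 → ℝ) =>
        (∏ i, gaussFactor s p.2 i (p.1 i)) * φ p.2) (volume.prod volume) := by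
      refine (h0.mul_prod h1).mono ?_ ?_
      · exact ((continuous_prod_gaussFactor s).mul
          (φ.continuous.comp continuous_snd)).aestronglyMeasurable
      · refine .of_forall fun p => le_of_eq ?_
        -- the character has modulus one, so its frequency does not affect the norm
        simp only [norm_mul, norm_prod, gaussFactor]
        simp [Complex.norm_exp]
    exact h2.smul (((2 * Real.pi) ^ 3)⁻¹)
  calc _ = ∫ ξ : Fin 3 → ℝ, ∫ x : Fin 3 → ℝ,
        ((2 * Real.pi) ^ 3)⁻¹ • ((∏ i, gaussFactor s x i (ξ i)) * φ x) := by
        congr 1; ext ξ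
        rw [invFT, integral_smul, mul_smul_comm, mul_smul_comm, ← integral_const_mul,
          ← integral_const_mul]
        congr 2; ext x
        rw [prod_gaussFactor]
        ring
    _ = ∫ x : Fin 3 → ℝ, ∫ ξ : Fin 3 → ℝ,
        ((2 * Real.pi) ^ 3)⁻¹ • ((∏ i, gaussFactor s x i (ξ i)) * φ x) :=
        integral_integral_swap hint
    _ = _ := by
        congr 1; ext x
        rw [integral_smul, integral_mul_const, ← smul_mul_assoc, integral_prod_gaussFactor hs]

lemma Gamma_three_halves : Real.Gamma (1 / 2 + 1) = Real.sqrt Real.pi / 2 := by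
  rw [Real.Gamma_add_one (by norm_num), Real.Gamma_one_half_eq]; ring

lemma Gamma_five_halves : Real.Gamma (3 / 2 + 1) = 3 * Real.sqrt Real.pi / 4 := by
  rw [show (3 / 2 : ℝ) = 1 / 2 + 1 by norm_num, Real.Gamma_add_one (by norm_num),
    Gamma_three_halves]; ring

/-- Superposing `s⁻⁴ gaussKernel s`, which is the substitution `t = 1/s` in
`∫ t² F⁻¹(ξ₀³ ξ₁ exp(-t|ξ|²)) dt`, splits into two Gamma integrals. -/
lemma kernel_eq {s : ℝ} (hs : 0 < s) (x : Fin 3 → ℝ) :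
    s ^ (-2 : ℝ) * ((s⁻¹) ^ (2 : ℝ) * gaussKernel s x)
      = (8 * Real.pi * Real.sqrt Real.pi)⁻¹ *
        (1 / 16 * ((s ^ (3 / 2 : ℝ) * Real.exp (-(1 / 4 * nsq x * s))) * (x 0 ^ 3 * x 1))
        - 3 / 8 * ((s ^ (1 / 2 : ℝ) * Real.exp (-(1 / 4 * nsq x * s))) * (x 0 * x 1))) := by
  have h1 : s ^ (3 / 2 : ℝ) = s * Real.sqrt s := by
    rw [Real.sqrt_eq_rpow, show (3 / 2 : ℝ) = 1 + 1 / 2 by norm_num, Real.rpow_add hs,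
      Real.rpow_one]
  have h2 : s ^ (-2 : ℝ) = (s ^ 2)⁻¹ := by
    rw [Real.rpow_neg hs.le]; norm_cast
  have h3 : (s⁻¹) ^ (2 : ℝ) = (s ^ 2)⁻¹ := by
    rw [Real.rpow_two, inv_pow]
  rw [h1, h2, h3, ← Real.sqrt_eq_rpow, gaussKernel]
  have hq : 0 < Real.sqrt s := Real.sqrt_pos.2 hs
  have hp : 0 < Real.sqrt Real.pi := Real.sqrt_pos.2 Real.pi_pos
  have e1 : s = Real.sqrt s ^ 2 := (Real.sq_sqrt hs.le).symm
  have e2 : Real.pi = Real.sqrt Real.pi ^ 2 := (Real.sq_sqrt Real.pi_pos.le).symm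
  generalize Real.exp (-(1 / 4 * nsq x * s)) = E
  generalize Real.sqrt s = q at *
  generalize Real.sqrt Real.pi = p at *
  rw [e1, e2]
  field_simp
  ring

/-- After integration in `s`, the two Gamma integrals combine through
`x₀²/|x|⁵ - 1/|x|³ = -(x₁² + x₂²)/|x|⁵`. -/
lemma target_eq {x : Fin 3 → ℝ} (hx : x ≠ 0) :
    1 / 2 * ((8 * Real.pi * Real.sqrt Real.pi)⁻¹ *
        (1 / 16 * (Real.Gamma (3 / 2 + 1) * (1 / 4 * nsq x) ^ (-(3 / 2 + 1 : ℝ))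
          * (x 0 ^ 3 * x 1))
        - 3 / 8 * (Real.Gamma (1 / 2 + 1) * (1 / 4 * nsq x) ^ (-(1 / 2 + 1 : ℝ))
          * (x 0 * x 1))))
      = (-3) * x 0 * x 1 * ((x 1) ^ 2 + (x 2) ^ 2) /
            (32 * Real.pi * ((x 0) ^ 2 + (x 1) ^ 2 + (x 2) ^ 2) ^ ((5 : ℝ) / 2)) := by
  rw [Gamma_three_halves, Gamma_five_halves, show x 0 ^ 2 + x 1 ^ 2 + x 2 ^ 2 = nsq x from rfl]
  have hQ := nsq_pos hx
  have hp : 0 < Real.sqrt Real.pi := Real.sqrt_pos.2 Real.pi_pos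
  obtain ⟨r, hr, hrQ⟩ : ∃ r : ℝ, 0 < r ∧ nsq x = r ^ 2 :=
    ⟨Real.sqrt (nsq x), Real.sqrt_pos.2 hQ, (Real.sq_sqrt hQ.le).symm⟩
  have hx2 : x 1 ^ 2 + x 2 ^ 2 = r ^ 2 - x 0 ^ 2 := by
    rw [← hrQ]; unfold nsq; ring
  have g1 : (1 / 4 * nsq x) ^ (-(3 / 2 + 1 : ℝ)) = 32 / r ^ 5 := by
    rw [hrQ, show 1 / 4 * r ^ 2 = (r / 2) ^ (2 : ℝ) by rw [Real.rpow_two]; ring,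
      ← Real.rpow_mul (by positivity), show (2 : ℝ) * -(3 / 2 + 1) = -(5 : ℕ) by norm_num,
      Real.rpow_neg (by positivity), Real.rpow_natCast]
    field_simp; norm_num
  have g2 : (1 / 4 * nsq x) ^ (-(1 / 2 + 1 : ℝ)) = 8 / r ^ 3 := by
    rw [hrQ, show 1 / 4 * r ^ 2 = (r / 2) ^ (2 : ℝ) by rw [Real.rpow_two]; ring,
      ← Real.rpow_mul (by positivity), show (2 : ℝ) * -(1 / 2 + 1) = -(3 : ℕ) by norm_num,
      Real.rpow_neg (by positivity), Real.rpow_natCast]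
    field_simp; norm_num
  have g3 : nsq x ^ ((5 : ℝ) / 2) = r ^ 5 := by
    rw [hrQ, ← Real.rpow_two, ← Real.rpow_mul hr.le, show (2 : ℝ) * (5 / 2) = (5 : ℕ) by norm_num,
      Real.rpow_natCast]
  rw [g1, g2, g3, hx2]
  have := Real.pi_pos
  field_simp
  ring

/-- As a tempered distribution, the inverse Fourier transform of
`ξ₁³ξ₂/|ξ|⁶` equals `−3xy(y²+z²)/(32π(x²+y²+z²)^{5/2})`. -/
theorem invFT_xi1_cubed_xi2 :
    ∀ φ : SchwartzMap (Fin 3 → ℝ) ℂ,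
      ∫ ξ : Fin 3 → ℝ,
          (((ξ 0) ^ 3 * ξ 1 / ((ξ 0) ^ 2 + (ξ 1) ^ 2 + (ξ 2) ^ 2) ^ 3 : ℝ) : ℂ) * invFT (fun v => φ v) ξ
        = ∫ x : Fin 3 → ℝ,
          (((-3) * x 0 * x 1 * ((x 1) ^ 2 + (x 2) ^ 2) /
            (32 * Real.pi * ((x 0) ^ 2 + (x 1) ^ 2 + (x 2) ^ 2) ^ ((5 : ℝ) / 2)) : ℝ) : ℂ) * φ x := by
  intro φ
  obtain ⟨Ψ, hΨ⟩ := exists_schwartz_invFT φ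
  have hne : ∀ᵐ v : Fin 3 → ℝ, v ≠ 0 := by simp [ae_iff]
  have b31 : ∀ v : Fin 3 → ℝ, |v 0 ^ 3 * v 1| ≤ ‖v‖ ^ 4 := fun v => by
    rw [abs_mul, abs_pow, pow_succ ‖v‖ 3]
    gcongr <;> exact norm_le_pi_norm v _
  have b11 : ∀ v : Fin 3 → ℝ, |v 0 * v 1| ≤ ‖v‖ ^ 2 := fun v => by
    rw [abs_mul, pow_two]
    gcongr <;> exact norm_le_pi_norm v _
  have I0 := integrable_superposition (a := 2) (b := 1) (by norm_num) one_pos Ψ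
    (P := fun v => v 0 ^ 3 * v 1) (by fun_prop) (d := 4) (k := 2) b31 le_rfl (by norm_num)
  have I1 := integrable_superposition (a := 3 / 2) (b := 1 / 4) (by norm_num) (by norm_num) φ
    (P := fun v => v 0 ^ 3 * v 1) (by fun_prop) (d := 4) (k := 1) b31 (by norm_num) (by norm_num)
  have I2 := integrable_superposition (a := 1 / 2) (b := 1 / 4) (by norm_num) (by norm_num) φ
    (P := fun v => v 0 * v 1) (by fun_prop) (d := 2) (k := 1) b11 (by norm_num) (by norm_num)
  -- the integrand on the physical side, after the substitution `t = 1/s`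
  let G : ℝ → (Fin 3 → ℝ) → ℂ := fun s x => ((8 * Real.pi * Real.sqrt Real.pi)⁻¹ : ℝ) *
    ((1 / 16 : ℝ) * (((s ^ (3 / 2 : ℝ) * Real.exp (-(1 / 4 * nsq x * s)) : ℝ) : ℂ) *
        (((x 0 ^ 3 * x 1 : ℝ) : ℂ) * φ x))
      - (3 / 8 : ℝ) * (((s ^ (1 / 2 : ℝ) * Real.exp (-(1 / 4 * nsq x * s)) : ℝ) : ℂ) *
        (((x 0 * x 1 : ℝ) : ℂ) * φ x)))
  have hG : Integrable (Function.uncurry G) ((volume.restrict (Set.Ioi 0)).prod volume) :=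
    (((I1.const_mul _).sub (I2.const_mul _)).const_mul _)
  calc _ = ∫ ξ : Fin 3 → ℝ, (1 / 2 : ℂ) * ∫ t in Set.Ioi (0 : ℝ),
        ((t ^ (2 : ℝ) * Real.exp (-(1 * nsq ξ * t)) : ℝ) : ℂ) *
          (((ξ 0 ^ 3 * ξ 1 : ℝ) : ℂ) * Ψ ξ) := by
        refine integral_congr_ae ?_
        filter_upwards [hne] with ξ hξ
        rw [integral_rpow_mul_exp_mul_const (by norm_num) one_pos hξ, hΨ]
        have hQ := nsq_pos hξ
        have h1 : Real.Gamma (2 + 1) = 2 := by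
          rw [Real.Gamma_add_one (by norm_num), Real.Gamma_two]; norm_num
        have h2 : (1 * nsq ξ) ^ (-(2 + 1 : ℝ)) = (nsq ξ ^ 3)⁻¹ := by
          rw [one_mul, Real.rpow_neg hQ.le]; norm_num
        rw [h1, h2]
        simp only [nsq]
        push_cast
        ring
    _ = (1 / 2 : ℂ) * ∫ t in Set.Ioi (0 : ℝ), ∫ ξ : Fin 3 → ℝ,
        ((t ^ (2 : ℝ) * Real.exp (-(1 * nsq ξ * t)) : ℝ) : ℂ) *
          (((ξ 0 ^ 3 * ξ 1 : ℝ) : ℂ) * Ψ ξ) := by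
        rw [integral_const_mul, ← integral_integral_swap I0]
    _ = (1 / 2 : ℂ) * ∫ s in Set.Ioi (0 : ℝ), ∫ x : Fin 3 → ℝ, G s x := by
        rw [← integral_comp_rpow_Ioi _ (p := -1) (by norm_num)]
        congr 1
        refine setIntegral_congr_fun measurableSet_Ioi fun s hs => ?_
        have hs : 0 < s := hs
        have hp := gaussian_pairing φ hs
        simp only [← hΨ] at hp
        simp only [Real.rpow_neg_one, Complex.ofReal_mul ((s⁻¹) ^ (2 : ℝ)), mul_assoc]
        simp only [← mul_assoc (1 : ℝ)]
        rw [integral_const_mul, hp, ← integral_const_mul, ← integral_smul]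
        congr 1
        ext x
        have hk := congrArg (Complex.ofReal) (kernel_eq hs x)
        simp only [G, Complex.real_smul]
        norm_num only at hk ⊢
        push_cast at hk ⊢
        linear_combination (φ x) * hk
    _ = ∫ x : Fin 3 → ℝ, (1 / 2 : ℂ) * ∫ s in Set.Ioi (0 : ℝ), G s x := by
        rw [integral_integral_swap hG, integral_const_mul]
    _ = _ := by
        refine integral_congr_ae ?_
        filter_upwards [hne] with x hx
        rw [← target_eq hx]
        have j1 := fun c => (integrable_rpow_mul_exp_mul_const (a := 3 / 2) (b := 1 / 4)
          (by norm_num) (by norm_num) hx (((x 0 ^ 3 * x 1 : ℝ) : ℂ) * φ x)).const_mul c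
        have j2 := fun c => (integrable_rpow_mul_exp_mul_const (a := 1 / 2) (b := 1 / 4)
          (by norm_num) (by norm_num) hx (((x 0 * x 1 : ℝ) : ℂ) * φ x)).const_mul c
        simp only [G]
        rw [integral_const_mul, integral_sub (j1 _) (j2 _), integral_const_mul,
          integral_const_mul, integral_rpow_mul_exp_mul_const (by norm_num) (by norm_num) hx,
          integral_rpow_mul_exp_mul_const (by norm_num) (by norm_num) hx]
        push_cast
        ring
end

section
/- The inverse Fourier transform of ξ₁²ξ₂²/(|ξ|²)³ on ℝ³ equals (3x²y² + (x²+y²+z²)z²)/(32π (x²+y²+z²)^{5/2}) as a tempered distribution. -/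
/-!
The proof represents both functions as superpositions of Gaussians. Writing `q = |ξ|²`,

  `ξ₁²ξ₂² / q³ = ∫_{s > 0} (128 s⁴)⁻¹ ξ₁²ξ₂² e^{-q / (4s)} ds`,

by the Gamma integral in the variable `1 / s` (`integral_freqKernel`). For fixed `s` the integrand
is a product of functions of a single coordinate, so its inverse Fourier transform is a product of
the one-dimensional transforms of `e^{-ξ²/(4s)}` and `ξ² e^{-ξ²/(4s)}`; it equals

  `(32 π^{3/2})⁻¹ s^{-1/2} (1 - 2 s x²) (1 - 2 s y²) e^{-s (x² + y² + z²)}`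

(`integral_exp_mul_freqKernel`). Integrating this over `s > 0` produces three Gamma integrals, whose
sum is the function on the right-hand side (`integral_spaceKernel`).

What remains is to exchange the `s`-integral with the integral against a test function on either
side (`integral_kernel_mul_swap`). The `s`-integrals of the absolute values are bounded by
multiples of `‖ξ‖⁻²` and `‖x‖⁻¹`, which are integrable against Schwartz functions on `ℝ³`. On the
frequency side this uses that the inverse Fourier transform of a test function is again Schwartz.
-/

open MeasureTheory

open Set Real

/-! ### Schwartz functions on `ℝ³` -/

/-- The singularities `‖x‖⁻¹` and `‖x‖⁻²` are integrable against Schwartz functions on `ℝ³`: in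
polar coordinates for the sup norm, the Jacobian `r²` compensates them. -/
lemma integrable_inv_pow_norm_mul_schwartz {p : ℕ} (hp : p ≤ 2)
    (f : SchwartzMap (Fin 3 → ℝ) ℂ) :
    Integrable (fun x : Fin 3 → ℝ => (‖x‖ ^ p)⁻¹ * ‖f x‖) := by
  have hrad : Integrable (fun x : Fin 3 → ℝ => (‖x‖ ^ p)⁻¹ * ((1 + ‖x‖) ^ 4)⁻¹) := by
    rw [integrable_fun_norm_addHaar volume (f := fun y : ℝ => (y ^ p)⁻¹ * ((1 + y) ^ 4)⁻¹)]
    refine (integrable_inv_one_add_sq.integrableOn (s := Ioi 0)).mono' (by fun_prop) ?_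
    filter_upwards [ae_restrict_mem measurableSet_Ioi] with y hy
    have hy : 0 < y := hy
    rw [Real.norm_of_nonneg (by positivity)]
    simp only [Module.finrank_fintype_fun_eq_card, Fintype.card_fin, smul_eq_mul]
    have h1 : y ^ (3 - 1) * (y ^ p)⁻¹ = y ^ (2 - p) := by
      rw [pow_sub₀ _ hy.ne' hp]
    rw [← mul_assoc, h1, ← div_eq_mul_inv, inv_eq_one_div, div_le_div_iff₀ (by positivity) (by positivity)]
    interval_cases p <;> norm_num <;> nlinarith [pow_pos hy 2, pow_pos hy 3, pow_pos hy 4]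
  have hb := fun x => SchwartzMap.one_add_le_sup_seminorm_apply (𝕜 := ℝ) (m := (4, 0)) (k := 4) (n := 0)
    le_rfl le_rfl f x
  simp only [norm_iteratedFDeriv_zero] at hb
  set C := (2 : ℝ) ^ 4 * ((Finset.Iic ((4 : ℕ), (0 : ℕ))).sup fun m => SchwartzMap.seminorm ℝ m.1 m.2) f
  refine (hrad.mul_const C).mono' (by fun_prop) (.of_forall fun x => ?_)
  rw [Real.norm_of_nonneg (by positivity), mul_assoc]
  gcongr
  rw [inv_mul_eq_div, le_div_iff₀ (by positivity), mul_comm]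
  exact hb x

/-- The inverse Fourier transform of a Schwartz function is Schwartz: up to a constant it is
Mathlib's `𝓕⁻` on `EuclideanSpace ℝ (Fin 3)`, composed with the dilation by `(2π)⁻¹`. -/
lemma exists_schwartz_eq_invFT (φ : SchwartzMap (Fin 3 → ℝ) ℂ) :
    ∃ ψ : SchwartzMap (Fin 3 → ℝ) ℂ, ∀ ξ, invFT (fun v => φ v) ξ = ψ ξ := by
  let e : (Fin 3 → ℝ) ≃L[ℝ] EuclideanSpace ℝ (Fin 3) :=
    (PiLp.continuousLinearEquiv 2 ℝ (fun _ : Fin 3 => ℝ)).symm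
  let c : ℝˣ := Units.mk0 (2 * π)⁻¹ (by positivity)
  let s : (Fin 3 → ℝ) ≃L[ℝ] (Fin 3 → ℝ) := ContinuousLinearEquiv.smulLeft c
  let φ' : SchwartzMap (EuclideanSpace ℝ (Fin 3)) ℂ :=
    SchwartzMap.compCLMOfContinuousLinearEquiv ℝ e.symm φ
  refine ⟨((2 * π) ^ 3)⁻¹ • SchwartzMap.compCLMOfContinuousLinearEquiv ℝ (s.trans e)
    (FourierTransformInv.fourierInv φ'), fun ξ => ?_⟩
  have h : (SchwartzMap.compCLMOfContinuousLinearEquiv ℝ (s.trans e)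
      (FourierTransformInv.fourierInv φ')) ξ =
      FourierTransformInv.fourierInv φ' (e ((2 * π)⁻¹ • ξ)) := rfl
  rw [invFT, smul_apply, h, SchwartzMap.fourierInv_coe, Real.fourierInv_eq',
    ← (PiLp.volume_preserving_toLp (Fin 3)).integral_comp
    (MeasurableEquiv.toLp 2 _).measurableEmbedding]
  congr 1
  refine integral_congr_ae (.of_forall fun v => ?_)
  have h2 : φ' (WithLp.toLp 2 v) = φ v := rfl
  have h3 : 2 * π * inner ℝ (WithLp.toLp 2 v) (e ((2 * π)⁻¹ • ξ))
      = ξ 0 * v 0 + ξ 1 * v 1 + ξ 2 * v 2 := by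
    have : e ((2 * π)⁻¹ • ξ) = WithLp.toLp 2 ((2 * π)⁻¹ • ξ) := rfl
    rw [this]
    simp [PiLp.inner_apply, Fin.sum_univ_three]
    field_simp
  simp only [h2, h3, smul_eq_mul]
  rw [mul_comm Complex.I]

/-! ### One-dimensional Gaussian integrals -/

lemma integrable_pow_gaussian {b : ℝ} (hb : 0 < b) (x : ℝ) (n : ℕ) :
    Integrable fun ξ : ℝ =>
      (ξ : ℂ) ^ n * (Complex.exp (Complex.I * x * ξ) * Complex.exp (-(b : ℂ) * (ξ : ℂ) ^ 2)) := by
  have h := integrable_rpow_mul_exp_neg_mul_sq hb (s := n) (by linarith [n.cast_nonneg (α := ℝ)])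
  refine h.norm.mono' (by fun_prop) (.of_forall fun ξ => le_of_eq ?_)
  simp [Complex.norm_exp, ← Complex.ofReal_pow]

lemma integral_gaussian_zero {s : ℝ} (hs : 0 < s) (x : ℝ) :
    ∫ ξ : ℝ, Complex.exp (Complex.I * x * ξ) * Complex.exp (-((4 * s)⁻¹ : ℝ) * (ξ : ℂ) ^ 2)
      = ((√(4 * π * s) * Real.exp (-(s * x ^ 2)) : ℝ) : ℂ) := by
  rw [fourierIntegral_gaussian (by simpa using hs)]
  push_cast
  congr 1
  · rw [show ((π : ℂ) / (4 * (s : ℂ))⁻¹) = ((4 * π * s : ℝ) : ℂ) by push_cast; field_simp,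
      Real.sqrt_eq_rpow, Complex.ofReal_cpow (by positivity)]
    norm_num
  · congr 1
    have : (s : ℂ) ≠ 0 := by exact_mod_cast hs.ne'
    field_simp

/-- The second moment is obtained from the zeroth one by integrating the derivatives of
`f ξ = e^{ixξ - bξ²}` and of `ξ * f ξ`, which gives two linear relations between the moments of
order `0`, `1` and `2`. -/
lemma integral_gaussian_sq {s : ℝ} (hs : 0 < s) (x : ℝ) :
    ∫ ξ : ℝ, (ξ : ℂ) ^ 2 *
        (Complex.exp (Complex.I * x * ξ) * Complex.exp (-((4 * s)⁻¹ : ℝ) * (ξ : ℂ) ^ 2))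
      = ((2 * s * (1 - 2 * s * x ^ 2) * (√(4 * π * s) * Real.exp (-(s * x ^ 2))) : ℝ) : ℂ) := by
  set b : ℝ := (4 * s)⁻¹ with hb
  have hb0 : 0 < b := by positivity
  let f : ℝ → ℂ := fun ξ => Complex.exp (Complex.I * x * ξ) * Complex.exp (-(b : ℂ) * (ξ : ℂ) ^ 2)
  have hi : ∀ n : ℕ, Integrable fun ξ : ℝ => (ξ : ℂ) ^ n * f ξ :=
    fun n => integrable_pow_gaussian hb0 x n
  have hd : ∀ ξ : ℝ, HasDerivAt f ((Complex.I * x - 2 * b * ξ) * f ξ) ξ := by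
    intro ξ
    have h0 : HasDerivAt (fun y : ℝ => (y : ℂ)) 1 ξ := Complex.ofRealCLM.hasDerivAt
    have h1 := (h0.const_mul (Complex.I * (x : ℂ))).cexp
    have h2 := ((h0.pow 2).const_mul (-(b : ℂ))).cexp
    convert! h1.mul h2 using 1
    simp only [f, Pi.pow_apply]
    push_cast
    ring
  have e1 : ∫ ξ : ℝ, (Complex.I * x - 2 * b * ξ) * f ξ = 0 := by
    refine integral_eq_zero_of_hasDerivAt_of_integrable hd ?_ ?_
    · convert! ((hi 0).const_mul (Complex.I * x)).sub ((hi 1).const_mul (2 * (b : ℂ))) using 2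
      simp; ring
    · simpa using hi 0
  have e2 : ∫ ξ : ℝ, (1 * f ξ + ξ * ((Complex.I * x - 2 * b * ξ) * f ξ)) = 0 := by
    refine integral_eq_zero_of_hasDerivAt_of_integrable
      (fun ξ => (Complex.ofRealCLM.hasDerivAt (x := ξ)).mul (hd ξ)) ?_ ?_
    · convert! ((hi 0).add ((hi 1).const_mul (Complex.I * x))).sub
        ((hi 2).const_mul (2 * (b : ℂ))) using 2
      simp; ring
    · convert! hi 1 using 2
      simp
  have hf : Integrable f := by simpa using hi 0
  have i1 : Integrable fun ξ : ℝ => Complex.I * x * f ξ := hf.const_mul _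
  have i2 : Integrable fun ξ : ℝ => Complex.I * x * ((ξ : ℂ) ^ 1 * f ξ) := (hi 1).const_mul _
  have i3 : Integrable fun ξ : ℝ => 2 * (b : ℂ) * ((ξ : ℂ) ^ 1 * f ξ) := (hi 1).const_mul _
  have i4 : Integrable fun ξ : ℝ => 2 * (b : ℂ) * ((ξ : ℂ) ^ 2 * f ξ) := (hi 2).const_mul _
  have i5 : Integrable fun ξ : ℝ => f ξ + Complex.I * x * ((ξ : ℂ) ^ 1 * f ξ) := hf.add i2
  have e1' : Complex.I * x * (∫ ξ, f ξ) - 2 * b * ∫ ξ : ℝ, (ξ : ℂ) ^ 1 * f ξ = 0 := by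
    rw [← e1, ← integral_const_mul, ← integral_const_mul, ← integral_sub i1 i3]
    congr 1; ext ξ; ring
  have e2' : (∫ ξ, f ξ) + Complex.I * x * (∫ ξ : ℝ, (ξ : ℂ) ^ 1 * f ξ)
      - 2 * b * ∫ ξ : ℝ, (ξ : ℂ) ^ 2 * f ξ = 0 := by
    rw [← e2, ← integral_const_mul, ← integral_const_mul, ← integral_add hf i2,
      ← integral_sub i5 i4]
    congr 1; ext ξ; ring
  have e0 := integral_gaussian_zero hs x
  rw [← hb] at e0
  change ∫ ξ, f ξ = _ at e0
  change ∫ ξ : ℝ, (ξ : ℂ) ^ 2 * f ξ = _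
  rw [e0] at e1' e2'
  set M1 := ∫ ξ : ℝ, (ξ : ℂ) ^ 1 * f ξ
  set M2 := ∫ ξ : ℝ, (ξ : ℂ) ^ 2 * f ξ
  push_cast at e1' e2' ⊢
  set G := (√(4 * π * s) : ℂ) * Complex.exp (-(s * x ^ 2))
  have hs' : (s : ℂ) ≠ 0 := by exact_mod_cast hs.ne'
  have hbs : (b : ℂ) * (4 * s) = 1 := by rw [hb]; push_cast; field_simp
  linear_combination -2 * (s : ℂ) * e2' - M2 * hbs
    + 2 * s * Complex.I * x * (-2 * s * e1' - M1 * hbs) + 4 * s ^ 2 * x ^ 2 * G * Complex.I_sq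

/-! ### The two Gaussian families and their integrals over the scale -/

/-- The squared Euclidean length on `ℝ³`. -/
def sqLen (x : Fin 3 → ℝ) : ℝ := x 0 ^ 2 + x 1 ^ 2 + x 2 ^ 2

/-- The norm of `Fin 3 → ℝ` is the sup norm, hence only an inequality. -/
lemma sq_norm_le_sqLen (x : Fin 3 → ℝ) : ‖x‖ ^ 2 ≤ sqLen x := by
  have h : ‖x‖ ≤ √(sqLen x) := by
    refine (pi_norm_le_iff_of_nonneg (by positivity)).2 fun i => Real.abs_le_sqrt ?_
    unfold sqLen
    fin_cases i <;> simp <;> nlinarith [sq_nonneg (x 0), sq_nonneg (x 1), sq_nonneg (x 2)]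
  have h0 : 0 ≤ sqLen x := by unfold sqLen; positivity
  calc ‖x‖ ^ 2 ≤ √(sqLen x) ^ 2 := by gcongr
    _ = _ := Real.sq_sqrt h0

lemma sqLen_pos {x : Fin 3 → ℝ} (hx : x ≠ 0) : 0 < sqLen x :=
  lt_of_lt_of_le (by positivity) (sq_norm_le_sqLen x)

/-- The Gaussian at scale `s > 0` whose superposition over `s` is `ξ₁²ξ₂² / |ξ|⁶`. -/
noncomputable def freqKernel (s : ℝ) (ξ : Fin 3 → ℝ) : ℝ :=
  128⁻¹ * (ξ 0 ^ 2 * ξ 1 ^ 2) * ((s ^ 4)⁻¹ * Real.exp (-((4 * s)⁻¹ * sqLen ξ)))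

/-- The inverse Fourier transform of `freqKernel s`. -/
noncomputable def spaceKernel (s : ℝ) (x : Fin 3 → ℝ) : ℝ :=
  (32 * π * √π)⁻¹ * (s ^ (-(1 / 2) : ℝ) *
    ((1 - 2 * s * x 0 ^ 2) * (1 - 2 * s * x 1 ^ 2)) * Real.exp (-(s * sqLen x)))

lemma integrableOn_gamma {a q : ℝ} (ha : 0 < a) (hq : 0 < q) :
    IntegrableOn (fun s : ℝ => s ^ (a - 1) * Real.exp (-(q * s))) (Ioi 0) := by
  simpa using integrableOn_rpow_mul_exp_neg_mul_rpow (p := 1) (s := a - 1) (b := q)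
    (by linarith) one_pos hq

/-- The substitution `u = s⁻¹` that turns the scale integral of `freqKernel` into a Gamma
integral. -/
lemma freq_congr (q : ℝ) : EqOn
    (fun s : ℝ => (|(-1 : ℝ)| * s ^ ((-1 : ℝ) - 1)) •
      ((s ^ (-1 : ℝ)) ^ ((3 : ℝ) - 1) * Real.exp (-(q / 4 * s ^ (-1 : ℝ)))))
    (fun s : ℝ => (s ^ 4)⁻¹ * Real.exp (-((4 * s)⁻¹ * q))) (Ioi 0) := by
  intro s hs
  have hs : 0 < s := hs
  have h2 : s ^ ((-1 : ℝ) - 1) = (s ^ 2)⁻¹ := by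
    rw [← Real.rpow_natCast, ← Real.rpow_neg hs.le]; norm_num
  have h3 : (s⁻¹) ^ ((3 : ℝ) - 1) = (s ^ 2)⁻¹ := by
    rw [show (3 : ℝ) - 1 = (2 : ℕ) by norm_num, Real.rpow_natCast, inv_pow]
  simp only [smul_eq_mul, Real.rpow_neg_one, h2, h3]
  rw [abs_neg, abs_one, one_mul, ← mul_assoc, ← mul_inv, ← pow_add]
  congr 3
  field_simp

lemma integrableOn_freq {q : ℝ} (hq : 0 < q) :
    IntegrableOn (fun s : ℝ => (s ^ 4)⁻¹ * Real.exp (-((4 * s)⁻¹ * q))) (Ioi 0) := by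
  rw [← integrableOn_congr_fun (freq_congr q) measurableSet_Ioi,
    integrableOn_Ioi_comp_rpow_iff
      (fun u : ℝ => u ^ ((3 : ℝ) - 1) * Real.exp (-(q / 4 * u))) (by norm_num)]
  exact integrableOn_gamma (by norm_num) (by positivity)

lemma integral_freq {q : ℝ} (hq : 0 < q) :
    ∫ s in Ioi (0 : ℝ), (s ^ 4)⁻¹ * Real.exp (-((4 * s)⁻¹ * q)) = 128 / q ^ 3 := by
  rw [← setIntegral_congr_fun measurableSet_Ioi (freq_congr q),
    integral_comp_rpow_Ioi
      (fun u : ℝ => u ^ ((3 : ℝ) - 1) * Real.exp (-(q / 4 * u))) (by norm_num),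
    Real.integral_rpow_mul_exp_neg_mul_Ioi (by norm_num) (by positivity),
    show (3 : ℝ) = (2 : ℕ) + 1 by norm_num, Real.Gamma_nat_eq_factorial,
    show (((2 : ℕ) : ℝ) + 1) = (3 : ℕ) by norm_num, Real.rpow_natCast]
  norm_num [Nat.factorial]
  field_simp
  norm_num

lemma freqKernel_nonneg (s : ℝ) (ξ : Fin 3 → ℝ) : 0 ≤ freqKernel s ξ := by
  unfold freqKernel
  have : 0 ≤ s ^ 4 := by positivity
  positivity

lemma integral_freqKernel (ξ : Fin 3 → ℝ) :
    ∫ s in Ioi (0 : ℝ), freqKernel s ξ = ξ 0 ^ 2 * ξ 1 ^ 2 / sqLen ξ ^ 3 := by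
  rcases eq_or_ne ξ 0 with rfl | hξ
  -- At the origin both sides vanish: the right-hand side is `0 / 0 = 0`.
  · simp [freqKernel]
  · simp only [freqKernel]
    rw [integral_const_mul, integral_freq (sqLen_pos hξ)]
    ring

lemma spatial_congr (a c q : ℝ) : EqOn
    (fun s : ℝ => s ^ (-(1 / 2) : ℝ) * ((1 - 2 * s * a) * (1 - 2 * s * c)) * Real.exp (-(s * q)))
    (fun s : ℝ => s ^ ((1 / 2 : ℝ) - 1) * Real.exp (-(q * s))
      - 2 * (a + c) * (s ^ ((3 / 2 : ℝ) - 1) * Real.exp (-(q * s)))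
      + 4 * (a * c) * (s ^ ((5 / 2 : ℝ) - 1) * Real.exp (-(q * s)))) (Ioi 0) := by
  intro s hs
  have hs : 0 < s := hs
  have h1 : s ^ ((1 / 2 : ℝ) - 1) = s ^ (-(1 / 2) : ℝ) := by norm_num
  have h2 : s ^ ((3 / 2 : ℝ) - 1) = s ^ (-(1 / 2) : ℝ) * s := by
    rw [← Real.rpow_add_one hs.ne']; norm_num
  have h3 : s ^ ((5 / 2 : ℝ) - 1) = s ^ (-(1 / 2) : ℝ) * s * s := by
    rw [← Real.rpow_add_one hs.ne', ← Real.rpow_add_one hs.ne']; norm_num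
  simp only [h1, h2, h3, mul_comm s q]
  ring

lemma integral_spaceKernel {x : Fin 3 → ℝ} (hx : x ≠ 0) :
    ∫ s in Ioi (0 : ℝ), spaceKernel s x =
      (3 * x 0 ^ 2 * x 1 ^ 2 + sqLen x * x 2 ^ 2) / (32 * π * sqLen x ^ ((5 : ℝ) / 2)) := by
  have hq := sqLen_pos hx
  have i1 := integrableOn_gamma (a := 1 / 2) (by norm_num) hq
  have i2 := (integrableOn_gamma (a := 3 / 2) (by norm_num) hq).const_mul
    (2 * (x 0 ^ 2 + x 1 ^ 2))
  have i3 := (integrableOn_gamma (a := 5 / 2) (by norm_num) hq).const_mul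
    (4 * (x 0 ^ 2 * x 1 ^ 2))
  have g3 : Real.Gamma (3 / 2) = √π / 2 := by
    rw [show (3 / 2 : ℝ) = 1 / 2 + 1 by norm_num, Real.Gamma_add_one (by norm_num),
      Real.Gamma_one_half_eq]; ring
  have g5 : Real.Gamma (5 / 2) = 3 * √π / 4 := by
    rw [show (5 / 2 : ℝ) = 3 / 2 + 1 by norm_num, Real.Gamma_add_one (by norm_num), g3]; ring
  set q := sqLen x with hqdef
  have p1 : (1 / q) ^ (1 / 2 : ℝ) = q ^ 2 / q ^ ((5 : ℝ) / 2) := by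
    rw [Real.div_rpow zero_le_one hq.le, Real.one_rpow, div_eq_div_iff (by positivity)
      (by positivity), ← Real.rpow_natCast, ← Real.rpow_add hq]
    norm_num
  have p3 : (1 / q) ^ (3 / 2 : ℝ) = q / q ^ ((5 : ℝ) / 2) := by
    rw [Real.div_rpow zero_le_one hq.le, Real.one_rpow, div_eq_div_iff (by positivity)
      (by positivity), ← Real.rpow_one_add' hq.le (by norm_num)]
    norm_num
  have p5 : (1 / q) ^ (5 / 2 : ℝ) = 1 / q ^ ((5 : ℝ) / 2) := by
    rw [Real.div_rpow zero_le_one hq.le, Real.one_rpow]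
  have i4 : IntegrableOn (fun s : ℝ => s ^ ((1 / 2 : ℝ) - 1) * Real.exp (-(q * s))
      - 2 * (x 0 ^ 2 + x 1 ^ 2) * (s ^ ((3 / 2 : ℝ) - 1) * Real.exp (-(q * s)))) (Ioi 0) :=
    i1.sub i2
  simp only [spaceKernel]
  rw [← hqdef, integral_const_mul, setIntegral_congr_fun measurableSet_Ioi (spatial_congr _ _ _),
    integral_add i4 i3, integral_sub i1 i2, integral_const_mul, integral_const_mul,
    Real.integral_rpow_mul_exp_neg_mul_Ioi (by norm_num) hq,
    Real.integral_rpow_mul_exp_neg_mul_Ioi (by norm_num) hq,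
    Real.integral_rpow_mul_exp_neg_mul_Ioi (by norm_num) hq, g3, g5, Real.Gamma_one_half_eq,
    p1, p3, p5]
  have : 0 < √π := by positivity
  have hQ : 0 < q ^ ((5 : ℝ) / 2) := by positivity
  have hz : x 2 ^ 2 = q - x 0 ^ 2 - x 1 ^ 2 := by rw [hqdef, sqLen]; ring
  rw [hz]
  field_simp
  ring

/-- A multiple of this function dominates `|spaceKernel s x|`; half of the Gaussian decay is spent
on the polynomial factor. -/
noncomputable def spaceBound (s : ℝ) (x : Fin 3 → ℝ) : ℝ :=
  s ^ ((1 / 2 : ℝ) - 1) * Real.exp (-(‖x‖ ^ 2 / 2 * s))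

lemma abs_spaceKernel_le {s : ℝ} (hs : 0 < s) (x : Fin 3 → ℝ) :
    |spaceKernel s x| ≤ (π * √π)⁻¹ * spaceBound s x := by
  have hN := sq_norm_le_sqLen x
  set q := sqLen x with hq
  have h0 : x 0 ^ 2 ≤ q := by rw [hq, sqLen]; nlinarith [sq_nonneg (x 1), sq_nonneg (x 2)]
  have h1 : x 1 ^ 2 ≤ q := by rw [hq, sqLen]; nlinarith [sq_nonneg (x 0), sq_nonneg (x 2)]
  have hq0 : 0 ≤ q := (sq_nonneg _).trans h0
  have habs : ∀ a : ℝ, 0 ≤ a → a ≤ q → |1 - 2 * s * a| ≤ 1 + 2 * s * q := fun a ha haq => by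
    rw [abs_le]
    have := mul_le_mul_of_nonneg_left haq hs.le
    have := mul_nonneg hs.le ha
    constructor <;> nlinarith
  have hpoly : |(1 - 2 * s * x 0 ^ 2) * (1 - 2 * s * x 1 ^ 2)| ≤ 32 * Real.exp (s * q / 2) := by
    rw [abs_mul]
    have hsq : 0 ≤ s * q := by positivity
    calc _ ≤ (1 + 2 * s * q) * (1 + 2 * s * q) := by
          gcongr
          · exact habs _ (sq_nonneg _) h0
          · exact habs _ (sq_nonneg _) h1
      _ ≤ 32 * (1 + s * q / 2 + (s * q / 2) ^ 2 / 2) := by nlinarith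
      _ ≤ _ := by
          gcongr
          exact Real.quadratic_le_exp_of_nonneg (by positivity)
  have hp : 0 < s ^ (-(1 / 2) : ℝ) := by positivity
  rw [spaceKernel, spaceBound, abs_mul, abs_mul, abs_mul, abs_of_pos hp, Real.abs_exp,
    abs_of_pos (by positivity)]
  calc _ ≤ (32 * π * √π)⁻¹ * (s ^ (-(1 / 2) : ℝ) * (32 * Real.exp (s * q / 2))
          * Real.exp (-(s * q))) := by gcongr
    _ = (π * √π)⁻¹ * (s ^ ((1 / 2 : ℝ) - 1) * Real.exp (-(q / 2 * s))) := by
        rw [show -(q / 2 * s) = s * q / 2 + -(s * q) by ring, Real.exp_add,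
          show (1 / 2 : ℝ) - 1 = -(1 / 2) by norm_num]
        field_simp
    _ ≤ _ := by gcongr

lemma integral_spaceBound {x : Fin 3 → ℝ} (hx : x ≠ 0) :
    ∫ s in Ioi (0 : ℝ), spaceBound s x = √(2 * π) * (‖x‖ ^ 1)⁻¹ := by
  have : 0 < ‖x‖ := by positivity
  simp only [spaceBound]
  rw [Real.integral_rpow_mul_exp_neg_mul_Ioi (by norm_num) (by positivity),
    Real.Gamma_one_half_eq, ← Real.sqrt_eq_rpow, one_div_div, Real.sqrt_div (by norm_num),
    Real.sqrt_sq this.le, Real.sqrt_mul (by norm_num)]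
  ring

/-! ### Interchanging the integrals -/

/-- Fubini for a kernel `k s x` dominated by `D s x` with `∫ D s x ds ≤ C ‖x‖⁻ᵖ`, `p ≤ 2`. -/
lemma integral_kernel_mul_swap {k D : ℝ → (Fin 3 → ℝ) → ℝ} {C : ℝ} {p : ℕ} (hp : p ≤ 2)
    (hk : Measurable fun z : (Fin 3 → ℝ) × ℝ => k z.2 z.1)
    (hkD : ∀ s, 0 < s → ∀ x, |k s x| ≤ D s x)
    (hD : ∀ x, x ≠ 0 → IntegrableOn (fun s => D s x) (Ioi 0))
    (hDC : ∀ x, x ≠ 0 → ∫ s in Ioi (0 : ℝ), D s x ≤ C * (‖x‖ ^ p)⁻¹)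
    (f : SchwartzMap (Fin 3 → ℝ) ℂ) :
    ∫ x, ((∫ s in Ioi (0 : ℝ), k s x : ℝ) : ℂ) * f x =
      ∫ s in Ioi (0 : ℝ), ∫ x, (k s x : ℂ) * f x := by
  have hne : ∀ᵐ x : Fin 3 → ℝ, x ≠ 0 := compl_mem_ae_iff.2 (measure_singleton 0)
  have hk' : ∀ x, x ≠ 0 → IntegrableOn (fun s => k s x) (Ioi 0) := fun x hx => by
    refine (hD x hx).mono' (hk.comp measurable_prodMk_left).aestronglyMeasurable ?_
    filter_upwards [ae_restrict_mem measurableSet_Ioi] with s hs using hkD s hs x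
  have hmeas : Measurable fun z : (Fin 3 → ℝ) × ℝ => (k z.2 z.1 : ℂ) * f z.1 :=
    (Complex.measurable_ofReal.comp hk).mul (f.continuous.measurable.comp measurable_fst)
  have hint : Integrable (Function.uncurry fun (x : Fin 3 → ℝ) (s : ℝ) => (k s x : ℂ) * f x)
      (volume.prod (volume.restrict (Ioi 0))) := by
    change Integrable (fun z : (Fin 3 → ℝ) × ℝ => (k z.2 z.1 : ℂ) * f z.1) _
    rw [integrable_prod_iff hmeas.aestronglyMeasurable]
    refine ⟨?_, ?_⟩
    · filter_upwards [hne] with x hx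
      exact (hk' x hx).ofReal.mul_const _
    · refine ((integrable_inv_pow_norm_mul_schwartz hp f).const_mul C).mono'
        hmeas.aestronglyMeasurable.norm.integral_prod_right' ?_
      filter_upwards [hne] with x hx
      rw [Real.norm_of_nonneg (integral_nonneg fun _ => norm_nonneg _)]
      simp only [norm_mul, Complex.norm_real]
      rw [integral_mul_const, ← mul_assoc]
      gcongr
      refine le_trans (integral_mono_ae (hk' x hx).norm (hD x hx) ?_) (hDC x hx)
      filter_upwards [ae_restrict_mem measurableSet_Ioi] with s hs using hkD s hs x
  rw [← integral_integral_swap hint]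
  refine integral_congr_ae (.of_forall fun x => ?_)
  simp only
  rw [integral_mul_const, integral_complex_ofReal]

lemma integral_freqKernel_mul_swap (f : SchwartzMap (Fin 3 → ℝ) ℂ) :
    ∫ x, ((∫ s in Ioi (0 : ℝ), freqKernel s x : ℝ) : ℂ) * f x =
      ∫ s in Ioi (0 : ℝ), ∫ x, (freqKernel s x : ℂ) * f x := by
  refine integral_kernel_mul_swap (D := freqKernel) (C := 1) (p := 2) le_rfl
    (by unfold freqKernel sqLen; fun_prop) (fun s _ x => (abs_of_nonneg (freqKernel_nonneg s x)).le)
    (fun x hx => (integrableOn_freq (sqLen_pos hx)).const_mul _) (fun x hx => ?_) f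
  have hq := sqLen_pos hx
  have hN := sq_norm_le_sqLen x
  have : 0 < ‖x‖ := by positivity
  rw [integral_freqKernel, one_mul]
  calc _ ≤ sqLen x ^ 2 / sqLen x ^ 3 := by
        rw [sq (sqLen x)]
        gcongr
        · rw [sqLen]; nlinarith [sq_nonneg (x 1), sq_nonneg (x 2)]
        · rw [sqLen]; nlinarith [sq_nonneg (x 0), sq_nonneg (x 2)]
    _ = (sqLen x)⁻¹ := by field_simp
    _ ≤ _ := by gcongr

lemma integral_spaceKernel_mul_swap (f : SchwartzMap (Fin 3 → ℝ) ℂ) :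
    ∫ x, ((∫ s in Ioi (0 : ℝ), spaceKernel s x : ℝ) : ℂ) * f x =
      ∫ s in Ioi (0 : ℝ), ∫ x, (spaceKernel s x : ℂ) * f x := by
  refine integral_kernel_mul_swap (D := fun s x => (π * √π)⁻¹ * spaceBound s x)
    (C := (π * √π)⁻¹ * √(2 * π)) (p := 1) (by norm_num)
    (by unfold spaceKernel sqLen; fun_prop) (fun s hs x => abs_spaceKernel_le hs x)
    (fun x hx => ?_) (fun x hx => ?_) f
  · have : 0 < ‖x‖ := by positivity
    exact (integrableOn_gamma (by norm_num) (by positivity)).const_mul _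
  · rw [integral_const_mul, integral_spaceBound hx, mul_assoc]

/-! ### The Fourier transform at a fixed scale -/

lemma freqKernel_eq_prod (s : ℝ) (ξ : Fin 3 → ℝ) :
    (freqKernel s ξ : ℂ) = ((128 * s ^ 4)⁻¹ : ℝ) * ∏ i, (ξ i : ℂ) ^ (![2, 2, 0] : Fin 3 → ℕ) i *
      Complex.exp (-((4 * s)⁻¹ : ℝ) * (ξ i : ℂ) ^ 2) := by
  rw [freqKernel, sqLen, Fin.prod_univ_three]
  simp only [Matrix.cons_val_zero, Matrix.cons_val_one, Matrix.cons_val, pow_zero, one_mul]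
  rw [show -((4 * s)⁻¹ * (ξ 0 ^ 2 + ξ 1 ^ 2 + ξ 2 ^ 2)) = -(4 * s)⁻¹ * ξ 0 ^ 2
    + -(4 * s)⁻¹ * ξ 1 ^ 2 + -(4 * s)⁻¹ * ξ 2 ^ 2 by ring, Real.exp_add, Real.exp_add]
  push_cast
  rw [mul_inv]
  ring

lemma integrable_freqKernel {s : ℝ} (hs : 0 < s) :
    Integrable fun ξ : Fin 3 → ℝ => (freqKernel s ξ : ℂ) := by
  simp only [freqKernel_eq_prod]
  refine Integrable.const_mul ?_ _
  refine Integrable.fintype_prod (f := fun (i : Fin 3) (y : ℝ) =>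
    (y : ℂ) ^ (![2, 2, 0] : Fin 3 → ℕ) i * Complex.exp (-((4 * s)⁻¹ : ℝ) * (y : ℂ) ^ 2)) fun i => ?_
  simpa using integrable_pow_gaussian (b := (4 * s)⁻¹) (by positivity) 0
    ((![2, 2, 0] : Fin 3 → ℕ) i)

lemma integral_exp_mul_freqKernel {s : ℝ} (hs : 0 < s) (x : Fin 3 → ℝ) :
    ∫ ξ : Fin 3 → ℝ,
      Complex.exp (Complex.I * ((ξ 0 * x 0 + ξ 1 * x 1 + ξ 2 * x 2 : ℝ) : ℂ)) * freqKernel s ξ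
      = (((2 * π) ^ 3 * spaceKernel s x : ℝ) : ℂ) := by
  have h : ∀ ξ : Fin 3 → ℝ,
      Complex.exp (Complex.I * ((ξ 0 * x 0 + ξ 1 * x 1 + ξ 2 * x 2 : ℝ) : ℂ)) * freqKernel s ξ
      = ((128 * s ^ 4)⁻¹ : ℝ) * ∏ i, (ξ i : ℂ) ^ (![2, 2, 0] : Fin 3 → ℕ) i *
        (Complex.exp (Complex.I * x i * ξ i) *
          Complex.exp (-((4 * s)⁻¹ : ℝ) * (ξ i : ℂ) ^ 2)) := by
    intro ξ
    rw [freqKernel_eq_prod, Fin.prod_univ_three, Fin.prod_univ_three]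
    rw [show Complex.I * ((ξ 0 * x 0 + ξ 1 * x 1 + ξ 2 * x 2 : ℝ) : ℂ) = Complex.I * x 0 * ξ 0
      + Complex.I * x 1 * ξ 1 + Complex.I * x 2 * ξ 2 by push_cast; ring, Complex.exp_add,
      Complex.exp_add]
    ring
  simp only [h]
  rw [integral_const_mul, integral_fintype_prod_volume_eq_prod (fun (i : Fin 3) (y : ℝ) =>
    (y : ℂ) ^ (![2, 2, 0] : Fin 3 → ℕ) i * (Complex.exp (Complex.I * x i * y) *
          Complex.exp (-((4 * s)⁻¹ : ℝ) * (y : ℂ) ^ 2))), Fin.prod_univ_three]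
  simp only [Matrix.cons_val_zero, Matrix.cons_val_one, Matrix.cons_val, pow_zero, one_mul]
  rw [integral_gaussian_sq hs, integral_gaussian_sq hs, integral_gaussian_zero hs]
  norm_cast
  have hroot : s ^ (-(1 / 2) : ℝ) = (√s)⁻¹ := by
    rw [Real.rpow_neg hs.le, ← Real.sqrt_eq_rpow]
  rw [spaceKernel, sqLen, show -(s * (x 0 ^ 2 + x 1 ^ 2 + x 2 ^ 2)) = -(s * x 0 ^ 2)
    + -(s * x 1 ^ 2) + -(s * x 2 ^ 2) by ring, Real.exp_add, Real.exp_add, hroot,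
    show 4 * π * s = 2 ^ 2 * (π * s) by ring, Real.sqrt_mul (by norm_num),
    Real.sqrt_sq (by norm_num), Real.sqrt_mul pi_pos.le]
  have hs1 : s = √s ^ 2 := (Real.sq_sqrt hs.le).symm
  have hp1 : π = √π ^ 2 := (Real.sq_sqrt pi_pos.le).symm
  have hs2 : 0 < √s := by positivity
  have hp2 : 0 < √π := by positivity
  generalize √s = r at *
  generalize √π = w at *
  rw [hp1]
  generalize Real.exp (-(s * x 0 ^ 2)) = E0
  generalize Real.exp (-(s * x 1 ^ 2)) = E1
  generalize Real.exp (-(s * x 2 ^ 2)) = E2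
  subst hs1
  field_simp
  ring

/-- At a fixed scale, the inverse Fourier transform of `freqKernel s` is `spaceKernel s`, as
tempered distributions. -/
lemma integral_freqKernel_mul_invFT (φ : SchwartzMap (Fin 3 → ℝ) ℂ) {s : ℝ} (hs : 0 < s) :
    ∫ ξ, (freqKernel s ξ : ℂ) * invFT (fun v => φ v) ξ = ∫ x, (spaceKernel s x : ℂ) * φ x := by
  have hint : Integrable (Function.uncurry fun ξ x : Fin 3 → ℝ =>
      Complex.exp (Complex.I * ((ξ 0 * x 0 + ξ 1 * x 1 + ξ 2 * x 2 : ℝ) : ℂ)) *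
        ((freqKernel s ξ : ℂ) * φ x)) (volume.prod volume) := by
    refine Integrable.bdd_mul (c := 1) ((integrable_freqKernel hs).mul_prod φ.integrable)
      (by fun_prop) (.of_forall fun z => le_of_eq ?_)
    rw [mul_comm Complex.I]
    exact Complex.norm_exp_ofReal_mul_I _
  calc _ = ((2 * π) ^ 3)⁻¹ • ∫ ξ : Fin 3 → ℝ, ∫ x : Fin 3 → ℝ,
        Complex.exp (Complex.I * ((ξ 0 * x 0 + ξ 1 * x 1 + ξ 2 * x 2 : ℝ) : ℂ)) *
          ((freqKernel s ξ : ℂ) * φ x) := by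
        rw [← integral_smul]
        refine integral_congr_ae (.of_forall fun ξ => ?_)
        simp only [invFT]
        rw [mul_smul_comm, ← integral_const_mul]
        congr 2
        ext x
        ring
    _ = ((2 * π) ^ 3)⁻¹ • ∫ x : Fin 3 → ℝ, (((2 * π) ^ 3 * spaceKernel s x : ℝ) : ℂ) * φ x := by
        rw [integral_integral_swap hint]
        congr 2
        ext x
        rw [← integral_exp_mul_freqKernel hs x, ← integral_mul_const]
        congr 1
        ext ξ
        ring
    _ = _ := by
        rw [← integral_smul]
        congr 1
        ext x
        rw [Complex.ofReal_mul, mul_assoc, Complex.real_smul, ← mul_assoc, ← Complex.ofReal_mul,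
          inv_mul_cancel₀ (by positivity), Complex.ofReal_one, one_mul]

/-- As a tempered distribution, the inverse Fourier transform of
`ξ₁²ξ₂²/|ξ|⁶` equals `(3x²y² + (x²+y²+z²)z²)/(32π(x²+y²+z²)^{5/2})`. -/
theorem invFT_xi1_sq_xi2_sq :
    ∀ φ : SchwartzMap (Fin 3 → ℝ) ℂ,
      ∫ ξ : Fin 3 → ℝ,
          (((ξ 0) ^ 2 * (ξ 1) ^ 2 / ((ξ 0) ^ 2 + (ξ 1) ^ 2 + (ξ 2) ^ 2) ^ 3 : ℝ) : ℂ) * invFT (fun v => φ v) ξ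
        = ∫ x : Fin 3 → ℝ,
          (((3 * (x 0) ^ 2 * (x 1) ^ 2 + ((x 0) ^ 2 + (x 1) ^ 2 + (x 2) ^ 2) * (x 2) ^ 2) /
            (32 * Real.pi * ((x 0) ^ 2 + (x 1) ^ 2 + (x 2) ^ 2) ^ ((5 : ℝ) / 2)) : ℝ) : ℂ) * φ x := by
  intro φ
  have hne : ∀ᵐ x : Fin 3 → ℝ, x ≠ 0 := compl_mem_ae_iff.2 (measure_singleton 0)
  obtain ⟨ψ, hψ⟩ := exists_schwartz_eq_invFT φ
  calc _ = ∫ ξ, ((∫ s in Ioi (0 : ℝ), freqKernel s ξ : ℝ) : ℂ) * ψ ξ := by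
        refine integral_congr_ae (.of_forall fun ξ => ?_)
        simp only [integral_freqKernel, hψ, sqLen]
    _ = ∫ s in Ioi (0 : ℝ), ∫ ξ, (freqKernel s ξ : ℂ) * ψ ξ := integral_freqKernel_mul_swap ψ
    _ = ∫ s in Ioi (0 : ℝ), ∫ x, (spaceKernel s x : ℂ) * φ x := by
        refine setIntegral_congr_fun measurableSet_Ioi fun s hs => ?_
        simp only [← integral_freqKernel_mul_invFT φ hs, hψ]
    _ = ∫ x, ((∫ s in Ioi (0 : ℝ), spaceKernel s x : ℝ) : ℂ) * φ x :=
        (integral_spaceKernel_mul_swap φ).symm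
    _ = _ := by
        refine integral_congr_ae ?_
        filter_upwards [hne] with x hx
        rw [integral_spaceKernel hx, sqLen]
end
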